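/- Let A be a unital C*-algebra and let a, v ∈ A satisfy a = v · |a| and v* v · |a| = |a|. Then for every continuous function f : ℝ → ℝ with f(0) = 0, one has v* · f(|a*|) · v = f(|a|) and v · f(|a|) · v* = f(|a*|), where f is applied via continuous functional calculus. -/

import Mathlib

instance prodCfcInst {A : Type*} [CStarAlgebra A] :
    ContinuousFunctionalCalculus ℝ (A × A) IsSelfAdjoint :=
  IsSelfAdjoint.instContinuousFunctionalCalculus (A := A × A)

theorem intertwine_aux {A : Type*} [CStarAlgebra A] (x : A) (P : A × A) (hP : IsSelfAdjoint P)
    (h : x * P.1 = P.2 * x) (f : C(spectrum ℝ P, ℝ)) :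
    x * (cfcHom (R := ℝ) hP f).1 = (cfcHom (R := ℝ) hP f).2 * x := by
  open scoped ContinuousFunctionalCalculus in
  induction f using ContinuousMap.induction_on_of_compact with
  | const r =>
    have : (ContinuousMap.const (spectrum ℝ P) r) = algebraMap ℝ _ r := rfl
    rw [this, AlgHomClass.commutes]
    exact (Algebra.commutes r x).symm
  | id => rwa [cfcHom_id hP]
  | star_id => rwa [map_star, cfcHom_id, hP.star_eq]
  | add f g hf hg => rw [map_add, Prod.fst_add, Prod.snd_add, mul_add, add_mul, hf, hg]
  | mul f g hf hg =>
    rw [map_mul, Prod.fst_mul, Prod.snd_mul, ← mul_assoc, hf, mul_assoc, hg, mul_assoc]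
  | frequently f hf =>
    have hc := cfcHom_continuous (R := ℝ) hP
    have hcl : IsClosed {g : C(spectrum ℝ P, ℝ) |
        x * (cfcHom (R := ℝ) hP g).1 = (cfcHom (R := ℝ) hP g).2 * x} :=
      isClosed_eq (continuous_const.mul (continuous_fst.comp hc))
        ((continuous_snd.comp hc).mul continuous_const)
    exact hcl.closure_subset (mem_closure_iff_frequently.mpr hf)

theorem intertwine_cfc {A : Type*} [CStarAlgebra A] (x p q : A) (hp : IsSelfAdjoint p)
    (hq : IsSelfAdjoint q) (h : x * p = q * x) (f : ℝ → ℝ) (hf : Continuous f) :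
    x * cfc f p = cfc f q * x := by
  have hP : IsSelfAdjoint (p, q) := Prod.ext hp hq
  have key : cfc f (p, q) = (cfc f p, cfc f q) :=
    cfc_map_prod (R := ℝ) (S := ℝ) f p q hf.continuousOn hP hp hq
  have := intertwine_aux x (p, q) hP h ⟨_, hf.continuousOn.domRestrict⟩
  rw [← cfc_apply f (p, q) hP hf.continuousOn, key] at this
  exact this

theorem fix_cfc {A : Type*} [CStarAlgebra A] (c p : A) (hp : IsSelfAdjoint p)
    (h : c * p = p) (f : ℝ → ℝ) (hf : Continuous f) (hf0 : f 0 = 0) :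
    c * cfc f p = cfc f p := by
  have := intertwine_cfc (c - 1) p 0 hp (.zero A) (by simp [sub_mul, h]) f hf
  rw [cfc_apply_zero, hf0, map_zero, zero_mul, sub_mul, one_mul, sub_eq_zero] at this
  exact this

/-- Let `A` be a unital C*-algebra and let `a, v ∈ A` satisfy
`a = v·|a|` and `v* v·|a| = |a|` (polar decomposition). Then for every continuous
`f : ℝ → ℝ` with `f 0 = 0`, one has `v* · f(|a*|) · v = f(|a|)` and
`v · f(|a|) · v* = f(|a*|)`, where `|a| = √(a* a)`, `|a*| = √(a a*)` and `f` is applied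
via the continuous functional calculus. -/
theorem stmt7 {A : Type*} [CStarAlgebra A] [PartialOrder A] [StarOrderedRing A]
    (a v : A) (ha : a = v * CFC.sqrt (star a * a))
    (hv : star v * v * CFC.sqrt (star a * a) = CFC.sqrt (star a * a))
    (f : ℝ → ℝ) (hf : Continuous f) (hf0 : f 0 = 0) :
    star v * cfc f (CFC.sqrt (a * star a)) * v = cfc f (CFC.sqrt (star a * a)) ∧
      v * cfc f (CFC.sqrt (star a * a)) * star v = cfc f (CFC.sqrt (a * star a)) := by
  have hp0 : 0 ≤ CFC.sqrt (star a * a) := CFC.sqrt_nonneg _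
  have hpp : CFC.sqrt (star a * a) * CFC.sqrt (star a * a) = star a * a :=
    CFC.sqrt_mul_sqrt_self _ (star_mul_self_nonneg a)
  generalize CFC.sqrt (star a * a) = p at *
  have hp : IsSelfAdjoint p := hp0.isSelfAdjoint
  have hv' : p * (star v * v) = p := by
    have := congrArg star hv
    simpa [hp.star_eq, mul_assoc] using this
  have hq0 : 0 ≤ v * p * star v := star_right_conjugate_nonneg hp0 v
  have hq : IsSelfAdjoint (v * p * star v) := hq0.isSelfAdjoint
  have hqq : CFC.sqrt (a * star a) = v * p * star v := by
    refine CFC.sqrt_unique ?_ hq0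
    calc v * p * star v * (v * p * star v) = v * (p * (star v * v)) * p * star v := by
          simp only [mul_assoc]
      _ = v * p * star (v * p) := by rw [hv', star_mul, hp.star_eq]; simp only [mul_assoc]
      _ = a * star a := by rw [← ha]
  rw [hqq]
  have h1 : v * cfc f p = cfc f (v * p * star v) * v :=
    intertwine_cfc v p _ hp hq (by
      rw [mul_assoc, mul_assoc, hv']) f hf
  have h2 := fix_cfc (star v * v) p hp hv f hf hf0
  have h3 := fix_cfc (v * star v) (v * p * star v) hq (by
    calc v * star v * (v * p * star v) = v * (star v * v * p) * star v := by
          simp only [mul_assoc]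
      _ = _ := by rw [hv]) f hf hf0
  have h4 : cfc f (v * p * star v) * (v * star v) = cfc f (v * p * star v) := by
    have := congrArg star h3
    have hs : star (cfc f (v * p * star v)) = cfc f (v * p * star v) :=
      (cfc_predicate f (v * p * star v) : IsSelfAdjoint _).star_eq
    rwa [star_mul, hs, star_mul, star_star] at this
  constructor
  · rw [mul_assoc, ← h1, ← mul_assoc, h2]
  · rw [h1, mul_assoc, h4]
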